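/- arXiv:2302.13459 — 2 statements merged into one kernel-verified Lean document; each statement's English description precedes it below -/
import Mathlib

section
/- Let ρ = e^{2πi/3} ∈ ℍ and let J = E4^3/(E4^3 − E6^2). Then J vanishes to order exactly 3 at ρ, i.e. J(ρ) = J'(ρ) = J''(ρ) = 0 and J'''(ρ) ≠ 0, and the fourth derivative satisfies J''''(ρ) = 12 · (1+ρ)/(1−ρ) · J'''(ρ). -/
open Complex Filter Topology

noncomputable section

/-- The nome `q = e^{2πiτ}`. -/
def qq (τ : ℂ) : ℂ := Complex.exp (2 * Real.pi * Complex.I * τ)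

/-- The Eisenstein series `E₄(τ) = 1 + 240 Σ_{n≥1} σ₃(n) qⁿ`. -/
def E4 (τ : ℂ) : ℂ := 1 + 240 * ∑' n : ℕ, (∑ d ∈ (n + 1).divisors, (d : ℂ) ^ 3) * qq τ ^ (n + 1)

/-- The Eisenstein series `E₆(τ) = 1 − 504 Σ_{n≥1} σ₅(n) qⁿ`. -/
def E6 (τ : ℂ) : ℂ := 1 - 504 * ∑' n : ℕ, (∑ d ∈ (n + 1).divisors, (d : ℂ) ^ 5) * qq τ ^ (n + 1)

/-- The normalized elliptic modular function `J = E₄³ / (E₄³ − E₆²)`. -/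
def J (τ : ℂ) : ℂ := E4 τ ^ 3 / (E4 τ ^ 3 - E6 τ ^ 2)

/-- The Dedekind eta function `η(τ) = e^{πiτ/12} ∏_{n≥1} (1 − qⁿ)`. -/
def dedekindEta (τ : ℂ) : ℂ := Complex.exp (Real.pi * Complex.I * τ / 12) * ∏' n : ℕ, (1 - qq τ ^ (n + 1))

/-- The elliptic point `ρ = e^{2πi/3}`. -/
def rho : ℂ := Complex.exp (2 * Real.pi * Complex.I / 3)

open UpperHalfPlane hiding I J
open scoped MatrixGroups ModularForm Manifold Real ArithmeticFunction.sigma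

lemma iteratedDeriv_sub_pow_three_mul {h : ℂ → ℂ} {a : ℂ} (hh : AnalyticAt ℂ h a) (n : ℕ) :
    iteratedDeriv n (fun z ↦ (z - a) ^ 3 * h z) a =
      n.descFactorial 3 * iteratedDeriv (n - 3) h a := by
  have hp : ∀ i, iteratedDeriv i (fun z : ℂ ↦ (z - a) ^ 3) a = if i = 3 then 6 else 0 := by
    intro i
    have := congrFun (iteratedDeriv_comp_sub_const i (fun z : ℂ ↦ z ^ 3) a) a
    rw [this, sub_self, iteratedDeriv_fun_pow_zero]
    split_ifs with hi <;> simp [Nat.factorial]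
  rw [iteratedDeriv_fun_mul (by fun_prop) hh.contDiffAt]
  simp only [hp, mul_ite, ite_mul, mul_zero, zero_mul, Finset.sum_ite_eq']
  split_ifs with hn
  · rw [Nat.descFactorial_eq_factorial_mul_choose]
    simp only [Nat.factorial]
    push_cast
    ring
  · simp at hn
    rw [Nat.descFactorial_of_lt hn]; simp

lemma eisenstein_tsum_eq (k : ℕ) (z : ℍ) :
    ∑' n : ℕ, (∑ d ∈ (n + 1).divisors, (d : ℂ) ^ k) * qq z ^ (n + 1) =
      ∑' n : ℕ+, (σ k n : ℂ) * cexp (2 * π * Complex.I * z) ^ (n : ℤ) := by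
  rw [← tsum_pnat_eq_tsum_succ (f := fun n ↦ (∑ d ∈ n.divisors, (d : ℂ) ^ k) * qq z ^ n)]
  simp [ArithmeticFunction.sigma_apply, qq]

lemma E4_coe (z : ℍ) : E4 z = ModularForm.E₄ z := by
  rw [EisensteinSeries.q_expansion_bernoulli _ ⟨2, rfl⟩, E4, eisenstein_tsum_eq]
  norm_num [show bernoulli 4 = -1 / 30 by decide +kernel]

lemma E6_coe (z : ℍ) : E6 z = ModularForm.E₆ z := by
  rw [EisensteinSeries.q_expansion_bernoulli _ ⟨3, rfl⟩, E6, eisenstein_tsum_eq]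
  norm_num [show bernoulli 6 = 1 / 42 by decide +kernel]

lemma analyticAt_of_eq_modularForm {k : ℤ} {F : ℂ → ℂ} {f : ModularForm 𝒮ℒ k}
    (h : ∀ z : ℍ, F z = f z) (z : ℍ) : AnalyticAt ℂ F z := by
  have hd : DifferentiableOn ℂ F upperHalfPlaneSet :=
    (UpperHalfPlane.mdifferentiable_iff.mp f.holo').congr fun w hw ↦ by
      simpa [ofComplex_apply_of_im_pos hw] using h ⟨w, hw⟩
  exact hd.analyticAt (isOpen_upperHalfPlaneSet.mem_nhds z.im_pos)

lemma modularForm_neg_inv_add_one {k : ℤ} {F : ℂ → ℂ} {f : ModularForm 𝒮ℒ k}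
    (h : ∀ z : ℍ, F z = f z) (z : ℍ) : F (-1 / (z + 1)) = (z + 1 : ℂ) ^ k * F z := by
  have hf := SlashInvariantForm.slash_action_eqn'' f
    (γ := Matrix.SpecialLinearGroup.mapGL ℝ (ModularGroup.S * ModularGroup.T))
    (MonoidHom.mem_range.mpr ⟨_, rfl⟩ : _ ∈ 𝒮ℒ) z
  have hz : (((ModularGroup.S * ModularGroup.T : SL(2, ℤ)) • z : ℍ) : ℂ) = -1 / (z + 1) := by
    rw [mul_smul, modular_T_smul, modular_S_smul]
    simp [neg_div, add_comm, ← inv_neg]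
  have hd : denom (Matrix.SpecialLinearGroup.mapGL ℝ (ModularGroup.S * ModularGroup.T)) z = z + 1 := by
    simp [denom, ModularGroup.coe_S, ModularGroup.coe_T, -map_mul]
  rw [hd, ← h, ← h] at hf
  rw [← hz]
  exact hf

lemma hasDerivAt_qParam (z : ℂ) : HasDerivAt (Function.Periodic.qParam 1)
    (2 * π * Complex.I * Function.Periodic.qParam 1 z) z := by
  have := (((hasDerivAt_id z).const_mul (2 * π * Complex.I)).div_const ((1 : ℝ) : ℂ)).cexp
  convert! this using 1
  simp [Function.Periodic.qParam]
  ring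

lemma tendsto_atImInfty {k : ℤ} (f : ModularForm 𝒮ℒ k) :
    Tendsto f atImInfty (𝓝 ((qExpansion 1 f).coeff 0)) := by
  have hc := (ModularFormClass.analyticAt_cuspFunction_zero f one_pos
    one_mem_strictPeriods_SL).continuousAt
  have := hc.tendsto.comp (qParam_tendsto_atImInfty one_pos)
  simp only [qExpansion_coeff, Nat.factorial_zero, iteratedDeriv_zero]
  simpa [Function.comp_def,
    SlashInvariantFormClass.eq_cuspFunction f _ one_mem_strictPeriods_SL one_ne_zero] using this

open Derivative in
lemma tendsto_normalizedDeriv_atImInfty {k : ℤ} (f : ModularForm 𝒮ℒ k) :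
    Tendsto (normalizedDerivOfComplex f) atImInfty (𝓝 0) := by
  have hq := qParam_tendsto_atImInfty one_pos
  have hc := (ModularFormClass.analyticAt_cuspFunction_zero f one_pos
    one_mem_strictPeriods_SL).deriv.continuousAt
  have := hq.mul (hc.tendsto.comp hq)
  rw [zero_mul] at this
  refine this.congr fun z ↦ ?_
  have hz : (f ∘ ofComplex) =ᶠ[𝓝 (z : ℂ)]
      cuspFunction 1 f ∘ Function.Periodic.qParam 1 := by
    filter_upwards [isOpen_upperHalfPlaneSet.mem_nhds z.im_pos] with w hw
    have := SlashInvariantFormClass.eq_cuspFunction f ⟨w, hw⟩ one_mem_strictPeriods_SL one_ne_zero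
    simpa [ofComplex_apply_of_im_pos hw] using this.symm
  have hd := ModularFormClass.differentiableAt_cuspFunction f one_pos one_mem_strictPeriods_SL
    (Function.Periodic.norm_qParam_lt_one one_pos z.im_pos)
  rw [normalizedDerivOfComplex, hz.deriv_eq,
    (hd.hasDerivAt.comp (z : ℂ) (hasDerivAt_qParam z)).deriv]
  simp only [Function.comp_apply]
  field_simp [two_pi_I_ne_zero]

lemma tendsto_of_hasSum_qExpansion {f : ℍ → ℂ} {c : ℕ → ℂ}
    (hf : ∀ z : ℍ, HasSum (fun m ↦ c m • Function.Periodic.qParam 1 z ^ m) (f z)) :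
    Tendsto f atImInfty (𝓝 (c 0)) := by
  let g : ℍ → ℂ := fun z ↦ (f z - c 0) / Function.Periodic.qParam 1 z
  have hg : IsBoundedAtImInfty g := by
    refine isBoundedAtImInfty_of_hasSum_qExpansion (c := fun m ↦ c (m + 1)) one_pos fun z ↦ ?_
    have h1 := (hasSum_nat_add_iff' 1).mpr (hf z)
    convert! h1.div_const (Function.Periodic.qParam 1 z) using 1
    · ext m
      have := Function.Periodic.qParam_ne_zero (h := 1) z
      simp only [smul_eq_mul]
      field_simp
      ring
    · simp [g]
  have h2 : Tendsto (fun z : ℍ ↦ Function.Periodic.qParam 1 z * g z) atImInfty (𝓝 0) := by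
    have := ((Asymptotics.isLittleO_one_iff ℝ).mpr
      (qParam_tendsto_atImInfty one_pos)).mul_isBigO hg
    simpa using (Asymptotics.isLittleO_one_iff ℝ).mp (by simpa using this)
  have h3 := h2.const_add (c 0)
  rw [add_zero] at h3
  refine h3.congr fun z ↦ ?_
  have := Function.Periodic.qParam_ne_zero (h := 1) z
  simp only [g]
  field_simp
  ring

lemma tendsto_E2_atImInfty : Tendsto EisensteinSeries.E2 atImInfty (𝓝 1) := by
  refine tendsto_of_hasSum_qExpansion
    (c := fun m ↦ (if m = 0 then 1 else -24 * σ 1 m : ℂ)) fun z ↦ ?_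
  simpa [Function.Periodic.qParam] using EisensteinSeries.hasSum_qExpansion_E2 (z := z)

lemma tendsto_serreDerivative_E4 :
    Tendsto (Derivative.serreDerivative (4 : ℤ) ModularForm.E₄) atImInfty (𝓝 (-1 / 3)) := by
  have h4 := tendsto_atImInfty ModularForm.E₄
  rw [EisensteinSeries.E_qExpansion_coeff_zero _ ⟨2, rfl⟩] at h4
  have := (tendsto_normalizedDeriv_atImInfty ModularForm.E₄).sub
    ((tendsto_E2_atImInfty.const_mul (((4 : ℤ) : ℂ) * 12⁻¹)).mul h4)
  convert! this using 2
  norm_num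

/-- The Serre derivative of `E₄`, as a level one modular form of weight 6. -/
def serreE4 : ModularForm 𝒮ℒ (4 + 2) where
  toFun := Derivative.serreDerivative (4 : ℤ) ModularForm.E₄
  slash_action_eq' := by
    rintro _ ⟨γ, rfl⟩
    exact Derivative.serreDerivative_slash_invariant ModularForm.E₄.holo'
      (ModularForm.E₄.slash_action_eq' _ ⟨γ, rfl⟩)
  holo' := Derivative.serreDerivative_mdifferentiable _ ModularForm.E₄.holo'
  bdd_at_cusps' {c} hc := by
    rw [Subgroup.IsArithmetic.isCusp_iff_isCusp_SL2Z] at hc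
    rw [OnePoint.isBoundedAt_iff_forall_SL2Z hc]
    intro γ _
    have := Derivative.serreDerivative_slash_invariant (γ := γ) ModularForm.E₄.holo'
      (ModularForm.E₄.slash_action_eq' _ ⟨γ, rfl⟩)
    refine (congrArg IsBoundedAtImInfty this).mpr ?_
    exact tendsto_serreDerivative_E4.isBigO_one ℝ

lemma exists_serreDerivative_E4_eq : ∃ c : ℂ, c ≠ 0 ∧
    ∀ z, Derivative.serreDerivative (4 : ℤ) ModularForm.E₄ z = c * ModularForm.E₆ z := by
  have h6 : (ModularForm.E₆ : ModularForm 𝒮ℒ 6) ≠ 0 := fun h ↦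
    EisensteinSeries.E_ne_zero _ ⟨3, rfl⟩ h
  obtain ⟨c, hc⟩ := (finrank_eq_one_iff_of_nonzero' _ h6).mp
    (Module.rank_eq_one_iff_finrank_eq_one.mp ModularForm.levelOne_weight_six_rank_one) serreE4
  have hz : ∀ z, Derivative.serreDerivative (4 : ℤ) ModularForm.E₄ z = c * ModularForm.E₆ z :=
    fun z ↦ (DFunLike.congr_fun hc z).symm
  refine ⟨c, ?_, hz⟩
  rintro rfl
  have := tendsto_serreDerivative_E4
  simp only [zero_mul] at hz
  rw [funext hz] at this
  have := tendsto_nhds_unique this tendsto_const_nhds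
  norm_num at this

lemma E4_cube_sub_E6_sq_ne_zero (z : ℍ) : E4 z ^ 3 - E6 z ^ 2 ≠ 0 := by
  have h := ModularForm.discriminant_ne_zero z
  rw [ModularForm.discriminant_eq_E₄_cube_sub_E₆_sq] at h
  rw [E4_coe, E6_coe]
  exact (div_ne_zero_iff.mp h).1

lemma deriv_E4_ne_zero {z : ℍ} (h : E4 z = 0) : deriv E4 z ≠ 0 := by
  obtain ⟨c, hc, hs⟩ := exists_serreDerivative_E4_eq
  have h6 : ModularForm.E₆ z ≠ 0 := by
    have := E4_cube_sub_E6_sq_ne_zero z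
    rw [h, E6_coe] at this
    intro h6
    simp [h6] at this
  have he : deriv E4 z = deriv (ModularForm.E₄ ∘ ofComplex) z := by
    apply Filter.EventuallyEq.deriv_eq
    filter_upwards [isOpen_upperHalfPlaneSet.mem_nhds z.im_pos] with w hw
    simpa [ofComplex_apply_of_im_pos hw] using E4_coe ⟨w, hw⟩
  intro h0
  have := hs z
  rw [Derivative.serreDerivative_apply, Derivative.normalizedDerivOfComplex, ← he, h0,
    ← E4_coe, h] at this
  simp at this
  tauto

lemma J_neg_inv_add_one (z : ℍ) : J (-1 / (z + 1)) = J z := by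
  have h4 := modularForm_neg_inv_add_one E4_coe z
  have h6 := modularForm_neg_inv_add_one E6_coe z
  have h1 : (z + 1 : ℂ) ≠ 0 := by
    intro h
    have := congrArg Complex.im h
    simp [z.im_ne_zero] at this
  have := E4_cube_sub_E6_sq_ne_zero z
  have e : E4 (-1 / (z + 1)) ^ 3 - E6 (-1 / (z + 1)) ^ 2 =
      (z + 1 : ℂ) ^ 12 * (E4 z ^ 3 - E6 z ^ 2) := by
    rw [h4, h6]
    norm_cast
    ring
  rw [J, e, h4, J]
  norm_cast
  field_simp

lemma rho_sq_add_rho_add_one : rho ^ 2 + rho + 1 = 0 := by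
  have h3 := (Complex.isPrimitiveRoot_exp 3 (by norm_num))
  have := h3.geom_sum_eq_zero (by norm_num)
  simp [Finset.sum_range_succ] at this
  rw [rho]
  linear_combination this

lemma rho_im_pos : 0 < rho.im := by
  have : rho = Complex.exp ((2 * π / 3 : ℝ) * Complex.I) := by
    rw [rho]; push_cast; ring_nf
  rw [this, Complex.exp_ofReal_mul_I_im]
  apply Real.sin_pos_of_pos_of_lt_pi <;> linarith [Real.pi_pos]

lemma rho_add_one_ne_zero : rho + 1 ≠ 0 := by
  intro h
  have hr := rho_sq_add_rho_add_one
  rw [eq_neg_of_add_eq_zero_left h] at hr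
  norm_num at hr

lemma neg_inv_rho_add_one : -1 / (rho + 1) = rho := by
  rw [div_eq_iff rho_add_one_ne_zero]
  linear_combination -rho_sq_add_rho_add_one

lemma one_sub_rho_ne_zero : 1 - rho ≠ 0 := by
  intro h
  have hr := rho_sq_add_rho_add_one
  rw [← sub_eq_zero.mp h] at hr
  norm_num at hr

lemma E4_rho : E4 rho = 0 := by
  have h := modularForm_neg_inv_add_one E4_coe ⟨rho, rho_im_pos⟩
  have hr := rho_sq_add_rho_add_one
  simp only [neg_inv_rho_add_one] at h
  norm_cast at h
  have : (1 - rho) * (1 + rho) * E4 rho = 0 := by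
    linear_combination h + (rho ^ 2 + 3 * rho + 1) * E4 rho * hr
  simpa [one_sub_rho_ne_zero, add_comm 1 rho, rho_add_one_ne_zero] using this

lemma exists_J_eq_sub_rho_cube_mul : ∃ h : ℂ → ℂ, AnalyticAt ℂ h rho ∧ h rho ≠ 0 ∧
    J = fun z ↦ (z - rho) ^ 3 * h z := by
  have h4 := analyticAt_of_eq_modularForm E4_coe ⟨rho, rho_im_pos⟩
  have h6 := analyticAt_of_eq_modularForm E6_coe ⟨rho, rho_im_pos⟩
  have hD := E4_cube_sub_E6_sq_ne_zero ⟨rho, rho_im_pos⟩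
  have hd : dslope E4 rho rho ≠ 0 := by
    rw [dslope_same]
    exact deriv_E4_ne_zero (z := ⟨rho, rho_im_pos⟩) E4_rho
  obtain ⟨p, hp⟩ := h4
  refine ⟨fun z ↦ dslope E4 rho z ^ 3 / (E4 z ^ 3 - E6 z ^ 2), ?_, ?_, ?_⟩
  · have hg : AnalyticAt ℂ (dslope E4 rho) rho := ⟨_, hp.has_fpower_series_dslope_fslope⟩
    have h4 : AnalyticAt ℂ E4 rho := ⟨p, hp⟩
    exact (hg.pow 3).div ((h4.pow 3).sub (h6.pow 2)) hD
  · exact div_ne_zero (pow_ne_zero 3 hd) hD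
  · ext z
    have := sub_smul_dslope E4 rho z
    rw [E4_rho, sub_zero, smul_eq_mul] at this
    rw [J, mul_div_assoc', ← mul_pow, this]

lemma deriv_of_J_eq_sub_rho_cube_mul {h : ℂ → ℂ} (hh : AnalyticAt ℂ h rho)
    (hJ : J = fun z ↦ (z - rho) ^ 3 * h z) :
    deriv h rho = 3 * rho / (1 - rho ^ 2) * h rho := by
  have hr := rho_sq_add_rho_add_one
  have hr1 := rho_add_one_ne_zero
  have heq : (fun z ↦ h (-1 / (z + 1))) =ᶠ[𝓝 rho] fun z ↦ -(z + 1) ^ 3 * h z := by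
    filter_upwards [isOpen_upperHalfPlaneSet.mem_nhds rho_im_pos] with z hz
    rcases eq_or_ne z rho with rfl | hne
    · rw [neg_inv_rho_add_one]
      linear_combination (rho + 2) * h rho * hr
    have hz1 : z + 1 ≠ 0 := by
      intro h0
      have := congrArg Complex.im h0
      simp only [add_im, one_im, add_zero, zero_im] at this
      exact hz.ne' this
    have key := J_neg_inv_add_one ⟨z, hz⟩
    have hsub : -1 / (z + 1) - rho = (z - rho) / ((z + 1) * (rho + 1)) := by
      rw [eq_div_iff (mul_ne_zero hz1 hr1), sub_mul, div_mul_eq_mul_div, sub_eq_iff_eq_add,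
        div_eq_iff hz1]
      linear_combination -(z + 1) ^ 2 * hr
    have hc : (rho + 1) ^ 3 = -1 := by linear_combination (rho + 2) * hr
    rw [hJ] at key
    simp only [hsub, div_pow, mul_pow, hc] at key
    have hs : (z - rho) ^ 3 ≠ 0 := pow_ne_zero 3 (sub_ne_zero.mpr hne)
    field_simp at key
    rw [neg_div]
    linear_combination -key
  have hL : HasDerivAt (fun z ↦ h (-1 / (z + 1))) (deriv h rho * (1 / (rho + 1) ^ 2)) rho := by
    have hi : HasDerivAt (fun z : ℂ ↦ -1 / (z + 1)) (1 / (rho + 1) ^ 2) rho := by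
      convert! (hasDerivAt_const rho (-1 : ℂ)).div ((hasDerivAt_id rho).add_const 1) hr1 using 1
      simp
    refine HasDerivAt.comp rho ?_ hi
    rw [neg_inv_rho_add_one]
    exact hh.differentiableAt.hasDerivAt
  have hR := ((((hasDerivAt_id rho).add_const 1).pow 3).neg).mul hh.differentiableAt.hasDerivAt
  have hu := hL.unique (hR.congr_of_eventuallyEq heq)
  have hsq : (rho + 1) ^ 2 = rho := by linear_combination hr
  have h0 : rho ≠ 0 := by rintro h0; rw [h0] at hr; norm_num at hr
  have h2 : 1 - rho ^ 2 ≠ 0 := by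
    rw [show 1 - rho ^ 2 = (1 - rho) * (rho + 1) by ring]
    exact mul_ne_zero one_sub_rho_ne_zero hr1
  have hu' : deriv h rho * (1 - rho) = -3 * rho ^ 2 * h rho := by
    simp [hsq] at hu
    field_simp at hu
    linear_combination hu - (rho + 2) * rho * deriv h rho * hr
  rw [div_mul_eq_mul_div, eq_div_iff h2]
  linear_combination (1 + rho) * hu' - 3 * rho * h rho * hr

/-- `J` vanishes to order exactly 3 at `ρ`, and `J''''(ρ) = 12·(1+ρ)/(1−ρ)·J'''(ρ)`. -/
theorem J_derivatives_at_rho :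
    J rho = 0 ∧
    deriv J rho = 0 ∧
    iteratedDeriv 2 J rho = 0 ∧
    iteratedDeriv 3 J rho ≠ 0 ∧
    iteratedDeriv 4 J rho = 12 * ((1 + rho) / (1 - rho)) * iteratedDeriv 3 J rho := by
  obtain ⟨h, hh, h0, hJ⟩ := exists_J_eq_sub_rho_cube_mul
  have hd := deriv_of_J_eq_sub_rho_cube_mul hh hJ
  have hn (n : ℕ) : iteratedDeriv n J rho = n.descFactorial 3 * iteratedDeriv (n - 3) h rho := by
    rw [hJ, iteratedDeriv_sub_pow_three_mul hh]
  have h1 := one_sub_rho_ne_zero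
  have h2 : 1 - rho ^ 2 ≠ 0 := by
    rw [show 1 - rho ^ 2 = (1 - rho) * (rho + 1) by ring]
    exact mul_ne_zero h1 rho_add_one_ne_zero
  refine ⟨by simp [hJ], ?_, ?_, ?_, ?_⟩
  · rw [← iteratedDeriv_one, hn]
    simp
  · rw [hn]
    simp
  · rw [hn]
    simpa [Nat.descFactorial] using h0
  · rw [hn, hn]
    simp only [Nat.descFactorial, iteratedDeriv_one, iteratedDeriv_zero, hd,
      Nat.reduceSub]
    push_cast
    field_simp
    linear_combination 72 * (rho - 1) * rho_sq_add_rho_add_one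
end
end

section
/- Let n ≥ 0 and let x_1, …, x_n ∈ (0,1) be pairwise distinct real numbers. Define the meromorphic function f(τ) = η(τ)^4 / ( (J(τ) − 1) ∏_{j=1}^n (J(τ) − x_j)² ) on the upper half-plane. Then f has a double pole at τ = i with vanishing residue; precisely, the limit as τ → i (τ ≠ i) of the derivative (d/dτ)[ (τ − i)² f(τ) ] equals 0. -/
open Complex Filter Topology

noncomputable section

/-- The Lambert-type series `Σ_{n≥1} σ_k(n) qⁿ`. -/
def divisorSeries (k : ℕ) (τ : ℂ) : ℂ :=
  ∑' n : ℕ, (∑ d ∈ (n + 1).divisors, (d : ℂ) ^ k) * qq τ ^ (n + 1)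

lemma hasDerivAt_qq (τ : ℂ) : HasDerivAt qq (qq τ * (2 * Real.pi * Complex.I)) τ := by
  have h := ((hasDerivAt_id τ).const_mul (2 * Real.pi * Complex.I : ℂ)).cexp
  rw [mul_one] at h
  exact h

lemma qq_I : qq Complex.I = (Real.exp (-(2 * Real.pi)) : ℂ) := by
  rw [qq, mul_assoc, Complex.I_mul_I]
  push_cast
  ring_nf

lemma isOpen_half_lt_im : IsOpen {w : ℂ | 1 / 2 < w.im} :=
  isOpen_lt continuous_const Complex.continuous_im

lemma half_lt_im_mem_nhds_I : {w : ℂ | 1 / 2 < w.im} ∈ 𝓝 Complex.I :=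
  isOpen_half_lt_im.mem_nhds (by norm_num)

lemma norm_qq (τ : ℂ) : ‖qq τ‖ = Real.exp (-(2 * Real.pi * τ.im)) := by
  simp [qq, Complex.norm_exp]

lemma exists_summable_bound_divisorSeries (k : ℕ) : ∃ u : ℕ → ℝ, Summable u ∧
    ∀ (n : ℕ) (w : ℂ), w ∈ {w : ℂ | 1 / 2 < w.im} →
      ‖(∑ d ∈ (n + 1).divisors, (d : ℂ) ^ k) * qq w ^ (n + 1)‖ ≤ u n := by
  let z : UpperHalfPlane := ⟨Complex.I / 2, by norm_num⟩
  have h := (summable_nat_add_iff 1).mpr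
    (EisensteinSeries.summable_sigma_mul_cexp_pow (k := k + 1) (by omega) z).norm
  refine ⟨_, h, fun n w hw ↦ ?_⟩
  have hq : ‖qq w‖ ≤ ‖qq z‖ := by
    rw [norm_qq, norm_qq, Real.exp_le_exp]
    have : (z : ℂ).im = 1 / 2 := by simp [z]
    rw [this]
    nlinarith [Real.pi_pos, show 1 / 2 < w.im from hw]
  rw [norm_mul, norm_mul, norm_pow, norm_pow]
  simp only [add_tsub_cancel_right, ArithmeticFunction.sigma_apply, Nat.cast_sum, Nat.cast_pow]
  gcongr
  exact hq

lemma differentiable_divisorSeries_term (k n : ℕ) :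
    Differentiable ℂ fun w ↦ (∑ d ∈ (n + 1).divisors, (d : ℂ) ^ k) * qq w ^ (n + 1) :=
  fun w ↦ ((hasDerivAt_qq w).differentiableAt.pow _).const_mul _

lemma differentiableOn_divisorSeries (k : ℕ) :
    DifferentiableOn ℂ (divisorSeries k) {w : ℂ | 1 / 2 < w.im} := by
  obtain ⟨u, hu, hb⟩ := exists_summable_bound_divisorSeries k
  exact differentiableOn_tsum_of_summable_norm hu
    (fun n ↦ (differentiable_divisorSeries_term k n).differentiableOn) isOpen_half_lt_im hb

lemma deriv_divisorSeries_I_ne_zero (k : ℕ) : deriv (divisorSeries k) Complex.I ≠ 0 := by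
  obtain ⟨u, hu, hb⟩ := exists_summable_bound_divisorSeries k
  have h := hasSum_deriv_of_summable_norm hu
    (fun n ↦ (differentiable_divisorSeries_term k n).differentiableOn) isOpen_half_lt_im hb
    (z := Complex.I) (by norm_num)
  have hterm (n : ℕ) :
      deriv (fun w ↦ (∑ d ∈ (n + 1).divisors, (d : ℂ) ^ k) * qq w ^ (n + 1)) Complex.I =
        (((∑ d ∈ (n + 1).divisors, (d : ℝ) ^ k) *
          ((n + 1) * Real.exp (-(2 * Real.pi)) ^ (n + 1) * (2 * Real.pi)) : ℝ) : ℂ) *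
            Complex.I := by
    rw [(((hasDerivAt_qq Complex.I).fun_pow (n + 1)).const_mul _).deriv, qq_I]
    push_cast
    ring
  simp_rw [hterm] at h
  have him := Complex.hasSum_im h
  simp only [Complex.im_ofReal_mul, Complex.I_im, mul_one] at him
  have hpos (n : ℕ) : 0 < (∑ d ∈ (n + 1).divisors, (d : ℝ) ^ k) *
      ((n + 1) * Real.exp (-(2 * Real.pi)) ^ (n + 1) * (2 * Real.pi)) := by
    have : 0 < ∑ d ∈ (n + 1).divisors, (d : ℝ) ^ k :=
      Finset.sum_pos (fun d hd ↦ pow_pos (Nat.cast_pos.mpr (Nat.pos_of_mem_divisors hd)) _)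
        ⟨1, by simp⟩
    positivity
  have hlt := him.summable.tsum_pos (fun n ↦ (hpos n).le) 0 (hpos 0)
  rw [him.tsum_eq] at hlt
  intro h0
  change 0 < (deriv (divisorSeries k) Complex.I).im at hlt
  simp [h0] at hlt

lemma E4_I_ne_zero : E4 Complex.I ≠ 0 := by
  have h : E4 Complex.I = ((1 + 240 * ∑' n : ℕ, (∑ d ∈ (n + 1).divisors, (d : ℝ) ^ 3) *
      Real.exp (-(2 * Real.pi)) ^ (n + 1) : ℝ) : ℂ) := by
    rw [E4, qq_I]
    push_cast
    rfl
  rw [h, Complex.ofReal_ne_zero]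
  have : 0 ≤ ∑' n : ℕ, (∑ d ∈ (n + 1).divisors, (d : ℝ) ^ 3) *
      Real.exp (-(2 * Real.pi)) ^ (n + 1) := tsum_nonneg fun n ↦ by positivity
  positivity

lemma eisensteinSeries_neg_inv {k : ℕ} (hk : 3 ≤ k) (z : UpperHalfPlane) :
    ModularForm.E hk (.mk _ z.im_inv_neg_coe_pos) =
      (z : ℂ) ^ k * ModularForm.E hk z := by
  have h := congrFun (SlashInvariantForm.slash_action_eqn (ModularForm.E hk) _
    (MonoidHom.mem_range.mpr ⟨ModularGroup.S, rfl⟩)) z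
  have h' := SlashInvariantForm.slash_S_apply (ModularForm.E hk) k z
  rw [ModularForm.SL_slash] at h'
  have h2 := h'.symm.trans h
  rw [← h2, zpow_neg, zpow_natCast]
  have := pow_ne_zero k z.ne_zero
  field_simp

lemma bernoulli_four : bernoulli 4 = -1 / 30 := by
  rw [bernoulli_eq_bernoulli'_of_ne_one (by decide), bernoulli'_four]

lemma bernoulli_six : bernoulli 6 = 1 / 42 := by
  have h5 : bernoulli' 5 = 0 := bernoulli'_eq_zero_of_odd (by decide) (by decide)
  rw [bernoulli_eq_bernoulli'_of_ne_one (by decide), bernoulli'_def]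
  norm_num [Finset.sum_range_succ, h5, Nat.choose]

lemma E4_eq_eisensteinSeries (z : UpperHalfPlane) : E4 z = ModularForm.E₄ z := by
  rw [EisensteinSeries.q_expansion_bernoulli _ ⟨2, rfl⟩, bernoulli_four]
  simp only [zpow_natCast]
  rw [tsum_pnat_eq_tsum_succ (f := fun n ↦ (ArithmeticFunction.sigma (4 - 1) n : ℂ) *
    cexp (2 * Real.pi * Complex.I * z) ^ n)]
  simp only [E4, qq, ArithmeticFunction.sigma_apply]
  push_cast
  norm_num

lemma E6_eq_eisensteinSeries (z : UpperHalfPlane) : E6 z = ModularForm.E₆ z := by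
  rw [EisensteinSeries.q_expansion_bernoulli _ ⟨3, rfl⟩, bernoulli_six]
  simp only [zpow_natCast]
  rw [tsum_pnat_eq_tsum_succ (f := fun n ↦ (ArithmeticFunction.sigma (6 - 1) n : ℂ) *
    cexp (2 * Real.pi * Complex.I * z) ^ n)]
  simp only [E6, qq, ArithmeticFunction.sigma_apply]
  push_cast
  norm_num

lemma E4_neg_inv {z : ℂ} (hz : 0 < z.im) : E4 (-z)⁻¹ = z ^ 4 * E4 z := by
  simpa [← E4_eq_eisensteinSeries] using eisensteinSeries_neg_inv (k := 4) (by norm_num) ⟨z, hz⟩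

lemma E6_neg_inv {z : ℂ} (hz : 0 < z.im) : E6 (-z)⁻¹ = z ^ 6 * E6 z := by
  simpa [← E6_eq_eisensteinSeries] using eisensteinSeries_neg_inv (k := 6) (by norm_num) ⟨z, hz⟩

lemma J_neg_inv {z : ℂ} (hz : 0 < z.im) : J (-z)⁻¹ = J z := by
  have h0 : z ≠ 0 := by rintro rfl; simp at hz
  rw [J, E4_neg_inv hz, E6_neg_inv hz, J, ← mul_div_mul_left (E4 z ^ 3) _ (pow_ne_zero 12 h0)]
  ring_nf

lemma E6_I : E6 Complex.I = 0 := by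
  have h := E6_neg_inv (z := Complex.I) (by norm_num)
  have h6 : Complex.I ^ 6 = -1 := by
    rw [show 6 = 2 * 3 from rfl, pow_mul, Complex.I_sq]; norm_num
  rw [inv_neg, Complex.inv_I, neg_neg, h6] at h
  linear_combination h / 2

lemma J_I : J Complex.I = 1 := by
  simp [J, E6_I, E4_I_ne_zero]

lemma dedekindEta_eq_eta (z : ℂ) : dedekindEta z = ModularForm.eta z := by
  simp only [dedekindEta, ModularForm.eta, ModularForm.eta_q_eq_pow, qq,
    Function.Periodic.qParam]
  congr 2
  push_cast
  ring

lemma sqrt_pow_four (z : ℂ) : Complex.sqrt z ^ 4 = z ^ 2 := by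
  rw [show 4 = 2 * 2 from rfl, pow_mul, Complex.sqrt, ← Nat.cast_two,
    Complex.cpow_nat_inv_pow _ two_ne_zero]

lemma dedekindEta_neg_inv_pow_four {z : ℂ} (hz : 0 < z.im) :
    dedekindEta (-z)⁻¹ ^ 4 = -z ^ 2 * dedekindEta z ^ 4 := by
  have h := ModularForm.eta_comp_eq_csqrt_I_inv hz
  simp only [Function.comp_apply, Pi.smul_apply, Pi.mul_apply, smul_eq_mul] at h
  rw [dedekindEta_eq_eta, dedekindEta_eq_eta, ← neg_inv, ← one_div, ← neg_div, h, mul_pow, mul_pow,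
    inv_pow, sqrt_pow_four, sqrt_pow_four, Complex.I_sq]
  ring

lemma differentiableOn_E4 : DifferentiableOn ℂ E4 {w : ℂ | 1 / 2 < w.im} :=
  ((differentiableOn_divisorSeries 3).const_mul 240).const_add 1

lemma differentiableOn_E6 : DifferentiableOn ℂ E6 {w : ℂ | 1 / 2 < w.im} :=
  ((differentiableOn_divisorSeries 5).const_mul 504).const_sub 1

lemma deriv_E6_I_ne_zero : deriv E6 Complex.I ≠ 0 := by
  have hd := (differentiableOn_divisorSeries 5).differentiableAt half_lt_im_mem_nhds_I
  have h : HasDerivAt E6 (-(504 * deriv (divisorSeries 5) Complex.I)) Complex.I :=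
    (hd.hasDerivAt.const_mul 504).const_sub 1
  rw [h.deriv]
  simpa using deriv_divisorSeries_I_ne_zero 5

/-- If `g` is differentiable at `i` and invariant under `z ↦ -1/z` near `i`, its derivative vanishes
at `i`. -/
lemma deriv_I_eq_zero_of_neg_inv {g : ℂ → ℂ} (hg : DifferentiableAt ℂ g Complex.I)
    (h : (fun z ↦ g (-z)⁻¹) =ᶠ[𝓝 Complex.I] g) : deriv g Complex.I = 0 := by
  have hI : (-Complex.I)⁻¹ = Complex.I := by simp
  have hinv : HasDerivAt (fun z : ℂ ↦ (-z)⁻¹) (-1) Complex.I := by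
    simpa using (hasDerivAt_neg Complex.I).fun_inv (by simp)
  have hc : HasDerivAt (fun z ↦ g (-z)⁻¹) (deriv g Complex.I * -1) Complex.I :=
    HasDerivAt.comp Complex.I (h₂ := g) (by simpa only [hI] using hg.hasDerivAt) hinv
  have := (hc.congr_of_eventuallyEq h.symm).unique hg.hasDerivAt
  linear_combination -this / 2

/-- The residue of `η⁴ / ((J−1)·∏ⱼ(J−xⱼ)²)` at its double pole `τ = i` vanishes:
`lim_{τ→i, τ≠i} (d/dτ)[(τ−i)² f(τ)] = 0`. -/
theorem residue_at_i_vanishes (n : ℕ) (x : Fin n → ℝ)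
    (hx : ∀ j, x j ∈ Set.Ioo (0 : ℝ) 1) (hinj : Function.Injective x) :
    Tendsto
      (fun τ : ℂ => deriv (fun z : ℂ =>
        (z - Complex.I) ^ 2 *
          (dedekindEta z ^ 4 / ((J z - 1) * ∏ j, (J z - (x j : ℂ)) ^ 2))) τ)
      (𝓝[≠] Complex.I) (𝓝 0) := by
  set P : ℂ → ℂ := fun z ↦ ∏ j, (J z - (x j : ℂ)) ^ 2 with hP
  set g : ℂ → ℂ := fun z ↦
    (z - Complex.I) ^ 2 * (dedekindEta z ^ 4 / ((J z - 1) * P z)) with hg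
  set G : ℂ → ℂ := fun z ↦
    dedekindEta z ^ 4 * (E4 z ^ 3 - E6 z ^ 2) / (dslope E6 Complex.I z ^ 2 * P z) with hG
  have hE4 : AnalyticAt ℂ E4 Complex.I := differentiableOn_E4.analyticAt half_lt_im_mem_nhds_I
  have hE6 : AnalyticAt ℂ E6 Complex.I := differentiableOn_E6.analyticAt half_lt_im_mem_nhds_I
  have hslope : AnalyticAt ℂ (dslope E6 Complex.I) Complex.I :=
    ((Complex.differentiableOn_dslope half_lt_im_mem_nhds_I).mpr
      differentiableOn_E6).analyticAt half_lt_im_mem_nhds_I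
  have hη : AnalyticAt ℂ dedekindEta Complex.I := by
    rw [funext dedekindEta_eq_eta]
    refine DifferentiableOn.analyticAt (s := UpperHalfPlane.upperHalfPlaneSet)
      (fun z hz ↦ (ModularForm.differentiableAt_eta_of_mem_upperHalfPlaneSet
        hz).differentiableWithinAt) (UpperHalfPlane.isOpen_upperHalfPlaneSet.mem_nhds ?_)
    simp [UpperHalfPlane.upperHalfPlaneSet]
  have hDelta : E4 Complex.I ^ 3 - E6 Complex.I ^ 2 ≠ 0 := by simp [E6_I, E4_I_ne_zero]
  have hJ : AnalyticAt ℂ J Complex.I := (hE4.pow 3).div ((hE4.pow 3).sub (hE6.pow 2)) hDelta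
  have hPan : AnalyticAt ℂ P Complex.I :=
    Finset.analyticAt_fun_prod _ fun j _ ↦ (hJ.sub analyticAt_const).pow 2
  have hPI : P Complex.I ≠ 0 := by
    refine Finset.prod_ne_zero_iff.mpr fun j _ ↦ pow_ne_zero 2 ?_
    rw [J_I, sub_ne_zero]
    exact_mod_cast (hx j).2.ne'
  have hGan : AnalyticAt ℂ G Complex.I := by
    refine ((hη.pow 4).mul ((hE4.pow 3).sub (hE6.pow 2))).div ((hslope.pow 2).mul hPan)
      (mul_ne_zero (pow_ne_zero 2 ?_) hPI)
    rw [dslope_same]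
    exact deriv_E6_I_ne_zero
  have hDelta_near : ∀ᶠ z in 𝓝 Complex.I, E4 z ^ 3 - E6 z ^ 2 ≠ 0 :=
    ((hE4.pow 3).sub (hE6.pow 2)).continuousAt.eventually_ne hDelta
  have hgG : ∀ᶠ z in 𝓝[≠] Complex.I, g z = G z := by
    filter_upwards [hDelta_near.filter_mono nhdsWithin_le_nhds, self_mem_nhdsWithin] with z hz hne
    have hne' : z - Complex.I ≠ 0 := sub_ne_zero.mpr hne
    have hs : E6 z = (z - Complex.I) * dslope E6 Complex.I z := by
      have := sub_smul_dslope E6 Complex.I z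
      rw [E6_I, sub_zero, smul_eq_mul] at this
      exact this.symm
    have hJ1 : J z - 1 = (z - Complex.I) ^ 2 * dslope E6 Complex.I z ^ 2 /
        (E4 z ^ 3 - E6 z ^ 2) := by
      rw [J, div_sub_one hz, ← mul_pow, ← hs]
      ring
    simp only [hg, hG, hJ1]
    rw [div_mul_eq_mul_div, div_div_eq_mul_div, ← mul_div_assoc, mul_assoc ((z - Complex.I) ^ 2),
      mul_div_mul_left _ _ (pow_ne_zero 2 hne')]
  have hg_inv : ∀ z : ℂ, 0 < z.im → g (-z)⁻¹ = g z := by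
    intro z hz
    have h0 : z ≠ 0 := by rintro rfl; simp at hz
    have hsq : ((-z)⁻¹ - Complex.I) ^ 2 = -(z - Complex.I) ^ 2 / z ^ 2 := by
      field_simp
      linear_combination (1 + z ^ 2) * Complex.I_sq
    simp only [hg, hP, J_neg_inv hz, dedekindEta_neg_inv_pow_four hz, hsq]
    field_simp
  have hcont : Tendsto (fun z : ℂ ↦ (-z)⁻¹) (𝓝[≠] Complex.I) (𝓝[≠] Complex.I) := by
    refine tendsto_nhdsWithin_iff.mpr ⟨?_, ?_⟩
    · have : ContinuousAt (fun z : ℂ ↦ (-z)⁻¹) Complex.I := continuousAt_neg.inv₀ (by simp)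
      simpa [ContinuousAt] using this.mono_left nhdsWithin_le_nhds
    · filter_upwards [self_mem_nhdsWithin] with z hz h
      refine hz ?_
      rw [Set.mem_singleton_iff] at h ⊢
      rw [← neg_neg z, ← inv_inv (-z), h, Complex.inv_I, neg_neg]
  have hG_inv : (fun z ↦ G (-z)⁻¹) =ᶠ[𝓝 Complex.I] G := by
    have hne : ∀ᶠ z in 𝓝[≠] Complex.I, G (-z)⁻¹ = G z := by
      filter_upwards [hgG, hcont.eventually hgG,
        mem_nhdsWithin_of_mem_nhds half_lt_im_mem_nhds_I] with z h1 h2 h3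
      rw [← h1, ← h2, hg_inv z (lt_trans (by norm_num) h3)]
    rw [eventually_nhdsWithin_iff] at hne
    filter_upwards [hne] with z hz
    by_cases h : z = Complex.I
    · simp [h]
    · exact hz h
  have hderiv : ∀ᶠ z in 𝓝[≠] Complex.I, deriv G z = deriv g z := by
    filter_upwards [eventually_eventually_nhdsWithin.mpr hgG, self_mem_nhdsWithin] with z hz hne
    rw [isOpen_compl_singleton.nhdsWithin_eq hne] at hz
    exact (EventuallyEq.deriv_eq hz).symm
  refine Tendsto.congr' hderiv ?_
  have hlim := hGan.deriv.continuousAt.tendsto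
  rw [deriv_I_eq_zero_of_neg_inv hGan.differentiableAt hG_inv] at hlim
  exact hlim.mono_left nhdsWithin_le_nhds
end
end
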